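/- Let $N_1, N_2, \bar N$ be lattices with surjective homomorphisms $h_1: N_1\to \bar N$, $h_2: N_2\to \bar N$, and let $\sigma_1, \sigma_2, \bar\sigma$ be strictly convex rational polyhedral cones with $\bar\sigma = h_{1,\mathbb{R}}(\sigma_1) = h_{2,\mathbb{R}}(\sigma_2)$. Then the set $\sigma_1\times_{\bar N}\sigma_2 = \{(v_1,v_2) : v_i\in\sigma_i,\ h_1(v_1)=h_2(v_2)\}$ is a rational polyhedral cone on the lattice $N_1\times_{\bar N} N_2 = \{(v_1,v_2)\in N_1\oplus N_2 : h_1(v_1)=h_2(v_2)\}$, and its dual cone is the image of $\sigma_1^\vee\times\sigma_2^\vee$ under the natural surjection $M_1\oplus M_2 \to (M_1\oplus M_2)/\bar M$. -/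

import Mathlib

/-- The convex cone generated by a set `S`. -/
def coneHull {E : Type*} [AddCommMonoid E] [Module ℝ E] (S : Set E) : Set E :=
  {x | ∃ (T : Finset E) (c : E → ℝ), ↑T ⊆ S ∧ (∀ t, 0 ≤ c t) ∧ x = ∑ t ∈ T, c t • t}

/-- The real extension of a `ℤ`-linear map between `ℤ^a` and `ℤ^b`. -/
noncomputable def realify {a b : ℕ} (f : (Fin a → ℤ) →ₗ[ℤ] (Fin b → ℤ)) :
    (Fin a → ℝ) →ₗ[ℝ] (Fin b → ℝ) :=
  Matrix.toLin' ((LinearMap.toMatrix' f).map (Int.cast : ℤ → ℝ))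

/-- Inclusion of the lattice `ℤ^a` into `ℝ^a`. -/
def toRa {a : ℕ} (v : Fin a → ℤ) : Fin a → ℝ := fun i => (v i : ℝ)

open scoped NNReal in
lemma coneHull_eq_span {E : Type*} [AddCommGroup E] [Module ℝ E] (S : Set E) :
    coneHull S = (Submodule.span ℝ≥0 S : Set E) := by
  ext x
  constructor
  · rintro ⟨T, c, hT, hc, rfl⟩
    refine Submodule.sum_mem _ fun t ht => ?_
    exact Submodule.smul_mem _ (⟨c t, hc t⟩ : ℝ≥0) (Submodule.subset_span (hT ht))
  · intro hx
    obtain ⟨c, hc, rfl⟩ := Submodule.mem_span_set.1 hx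
    exact ⟨c.support, fun t => (c t : ℝ), hc, fun t => (c t).2, rfl⟩

open scoped NNReal in
lemma mem_coneHull_finset {E : Type*} [AddCommGroup E] [Module ℝ E] (T : Finset E) (x : E) :
    x ∈ coneHull (T : Set E) ↔ ∃ c : E → ℝ, (∀ t, 0 ≤ c t) ∧ x = ∑ t ∈ T, c t • t := by
  classical
  constructor
  · intro hx
    rw [coneHull_eq_span] at hx
    obtain ⟨c, -, hc⟩ := Submodule.mem_span_finset.1 hx
    exact ⟨fun t => (c t : ℝ), fun t => (c t).2, hc.symm⟩
  · rintro ⟨c, hc, rfl⟩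
    exact ⟨T, c, subset_rfl, hc, rfl⟩

lemma coneHull_nonneg {E : Type*} [AddCommGroup E] [Module ℝ E] (S : Set E) (m : E →ₗ[ℝ] ℝ)
    (h : ∀ t ∈ S, 0 ≤ m t) (x : E) (hx : x ∈ coneHull S) : 0 ≤ m x := by
  obtain ⟨T, c, hT, hc, rfl⟩ := hx
  rw [map_sum]
  refine Finset.sum_nonneg fun t ht => ?_
  rw [map_smul]
  exact mul_nonneg (hc t) (h t (hT ht))

lemma subset_coneHull' {E : Type*} [AddCommGroup E] [Module ℝ E] (S : Set E) : S ⊆ coneHull S := by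
  rw [coneHull_eq_span]; exact Submodule.subset_span

lemma exists_sep {E : Type*} (P N : Finset E) (f g : E → ℝ)
    (h : ∀ s ∈ N, ∀ t ∈ P, f s ≤ g t) :
    ∃ l : ℝ, (∀ s ∈ N, f s ≤ l) ∧ (∀ t ∈ P, l ≤ g t) := by
  rcases N.eq_empty_or_nonempty with rfl | hN
  · rcases P.eq_empty_or_nonempty with rfl | hP
    · exact ⟨0, by simp, by simp⟩
    · exact ⟨P.inf' hP g, by simp, fun t ht => Finset.inf'_le _ ht⟩
  · exact ⟨N.sup' hN f, fun s hs => Finset.le_sup' _ hs,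
      fun t ht => Finset.sup'_le _ _ fun s hs => h s hs t ht⟩

open scoped NNReal in
lemma cone_step {E : Type*} [AddCommGroup E] [Module ℝ E] (L : AddSubgroup E) (T : Finset E)
    (hT : ∀ t ∈ T, t ∈ L) (φ : E →ₗ[ℝ] ℝ) (hφ : ∀ x ∈ L, ∃ n : ℤ, φ x = n) :
    ∃ T' : Finset E, (∀ t ∈ T', t ∈ L) ∧
      coneHull (T' : Set E) = {x | x ∈ coneHull (T : Set E) ∧ φ x = 0} ∧
      ∀ m : E →ₗ[ℝ] ℝ, (∀ t ∈ T', 0 ≤ m t) → ∃ l : ℝ, ∀ t ∈ T, 0 ≤ m t - l * φ t := by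
  classical
  set Z := T.filter (fun t => φ t = 0) with hZ
  set P := T.filter (fun t => 0 < φ t) with hP
  set N := T.filter (fun t => φ t < 0) with hN
  set w : E × E → E := fun p => φ p.1 • p.2 - φ p.2 • p.1 with hw
  have hsmul : ∀ x ∈ L, ∀ y ∈ L, φ x • y ∈ L := by
    intro x hx y hy
    obtain ⟨n, hn⟩ := hφ x hx
    rw [hn, Int.cast_smul_eq_zsmul]
    exact L.zsmul_mem hy n
  have hZm : ∀ {t}, t ∈ Z ↔ t ∈ T ∧ φ t = 0 := by simp [hZ]
  have hPm : ∀ {t}, t ∈ P ↔ t ∈ T ∧ 0 < φ t := by simp [hP]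
  have hNm : ∀ {t}, t ∈ N ↔ t ∈ T ∧ φ t < 0 := by simp [hN]
  have hmem : ∀ {t}, t ∈ Z ∪ (P ×ˢ N).image w ↔
      t ∈ Z ∨ ∃ p ∈ P, ∃ s ∈ N, φ p • s - φ s • p = t := by
    intro t
    rw [Finset.mem_union, Finset.mem_image]
    simp only [Finset.mem_product, Prod.exists, hw]
    constructor
    · rintro (h | ⟨p, s, ⟨h1, h2⟩, h3⟩)
      · exact Or.inl h
      · exact Or.inr ⟨p, h1, s, h2, h3⟩
    · rintro (h | ⟨p, h1, s, h2, h3⟩)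
      · exact Or.inl h
      · exact Or.inr ⟨p, s, ⟨h1, h2⟩, h3⟩
  refine ⟨Z ∪ (P ×ˢ N).image w, ?_, ?_, ?_⟩
  · intro t ht
    rcases hmem.1 ht with h | ⟨p, hp, s, hs, rfl⟩
    · exact hT t (hZm.1 h).1
    · have h1 := hT p (hPm.1 hp).1
      have h2 := hT s (hNm.1 hs).1
      exact L.sub_mem (hsmul _ h1 _ h2) (hsmul _ h2 _ h1)
  · apply Set.Subset.antisymm
    · have key : ∀ t ∈ Z ∪ (P ×ˢ N).image w, t ∈ coneHull (T : Set E) ∧ φ t = 0 := by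
        intro t ht
        rcases hmem.1 ht with h | ⟨p, hp, s, hs, rfl⟩
        · exact ⟨subset_coneHull' _ (hZm.1 h).1, (hZm.1 h).2⟩
        · refine ⟨?_, by simp [mul_comm]⟩
          have h1 := hPm.1 hp
          have h2 := hNm.1 hs
          rw [coneHull_eq_span, sub_eq_add_neg, ← neg_smul]
          refine Submodule.add_mem _ ?_ ?_
          · exact Submodule.smul_mem _ (⟨φ p, h1.2.le⟩ : ℝ≥0) (Submodule.subset_span h2.1)
          · exact Submodule.smul_mem _ (⟨-φ s, by linarith [h2.2]⟩ : ℝ≥0)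
              (Submodule.subset_span h1.1)
      intro x hx
      refine ⟨?_, ?_⟩
      · rw [coneHull_eq_span] at hx ⊢
        refine Submodule.span_le.2 ?_ hx
        intro t ht
        have := (key t ht).1
        rwa [coneHull_eq_span] at this
      · refine le_antisymm ?_ (coneHull_nonneg _ φ (fun t ht => (key t ht).2.ge) x hx)
        have := coneHull_nonneg _ (-φ) (fun t ht => by simp [(key t ht).2]) x hx
        simpa using this
    · rintro x ⟨hx, hx0⟩
      obtain ⟨c, hc, rfl⟩ := (mem_coneHull_finset _ _).1 hx
      have split : ∀ {F : Type _} [AddCommGroup F] (f : E → F), ∑ t ∈ T, f t = ∑ t ∈ Z, f t + (∑ t ∈ P, f t + ∑ t ∈ N, f t) := by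
        intro F _ f
        simp only [hZ, hP, hN, Finset.sum_filter, ← Finset.sum_add_distrib]
        refine Finset.sum_congr rfl fun t _ => ?_
        rcases lt_trichotomy (φ t) 0 with h | h | h
        · simp [h, h.ne, h.not_gt]
        · simp [h]
        · simp [h, h.ne', h.not_gt]
      have split1 := split (fun t => c t • t)
      have h0 : ∑ t ∈ P, c t * φ t = ∑ s ∈ N, c s * (-φ s) := by
        have := congrArg φ split1
        rw [hx0] at this
        simp only [map_add, map_sum, map_smul, smul_eq_mul] at this
        rw [Finset.sum_eq_zero (s := Z) (fun t ht => by rw [(hZm.1 ht).2, mul_zero])] at this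
        simp only [mul_neg, Finset.sum_neg_distrib]
        linarith
      set D := ∑ t ∈ P, c t * φ t with hD
      have hDn : 0 ≤ D := Finset.sum_nonneg fun t ht => mul_nonneg (hc t) (hPm.1 ht).2.le
      rw [split1, coneHull_eq_span]
      refine Submodule.add_mem _ ?_ ?_
      · refine Submodule.sum_mem _ fun t ht => ?_
        exact Submodule.smul_mem _ (⟨c t, hc t⟩ : ℝ≥0)
          (Submodule.subset_span (hmem.2 (Or.inl ht)))
      rcases hDn.eq_or_lt with hD0 | hDpos
      · have hp0 : ∀ t ∈ P, c t = 0 := by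
          intro t ht
          have := (Finset.sum_eq_zero_iff_of_nonneg
            (fun t ht => mul_nonneg (hc t) (hPm.1 ht).2.le)).1 (hD.symm.trans hD0.symm) t ht
          exact (mul_eq_zero.1 this).resolve_right (hPm.1 ht).2.ne'
        have hn0 : ∀ t ∈ N, c t = 0 := by
          intro t ht
          have := (Finset.sum_eq_zero_iff_of_nonneg
            (fun t ht => mul_nonneg (hc t) (neg_nonneg.2 (hNm.1 ht).2.le))).1
              (h0.symm.trans hD0.symm) t ht
          exact (mul_eq_zero.1 this).resolve_right (neg_ne_zero.2 (hNm.1 ht).2.ne)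
        rw [Finset.sum_eq_zero (s := P) (fun t ht => by rw [hp0 t ht, zero_smul]),
          Finset.sum_eq_zero (s := N) (fun t ht => by rw [hn0 t ht, zero_smul]), add_zero]
        exact Submodule.zero_mem _
      · have e : ∑ t ∈ P, c t • t + ∑ s ∈ N, c s • s =
            ∑ t ∈ P, ∑ s ∈ N, (c t * c s / D) • (φ t • s - φ s • t) := by
          have e1 : ∀ t s : E, (c t * c s / D) • (φ t • s - φ s • t) =
              ((c t * φ t) * (D⁻¹ * c s)) • s + ((c s * (-φ s)) * (D⁻¹ * c t)) • t := by
            intro t s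
            rw [smul_sub, smul_smul, smul_smul, sub_eq_add_neg, ← neg_smul]
            congr 2 <;> ring
          simp only [e1, Finset.sum_add_distrib]
          rw [Finset.sum_comm (s := P) (t := N)]
          simp only [← Finset.sum_smul, ← Finset.sum_mul]
          rw [← h0, ← hD]
          simp only [mul_inv_cancel_left₀ hDpos.ne']
          rw [add_comm]
        rw [e]
        refine Submodule.sum_mem _ fun t ht => Submodule.sum_mem _ fun s hs => ?_
        exact Submodule.smul_mem _
          (⟨c t * c s / D, div_nonneg (mul_nonneg (hc t) (hc s)) hDn⟩ : ℝ≥0)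
          (Submodule.subset_span (hmem.2 (Or.inr ⟨t, ht, s, hs, rfl⟩)))
  · intro m hm
    obtain ⟨l, hl1, hl2⟩ := exists_sep P N (fun s => m s / φ s) (fun t => m t / φ t) (by
      intro s hs t ht
      have := hm _ (hmem.2 (Or.inr ⟨t, ht, s, hs, rfl⟩))
      simp only [map_sub, map_smul, smul_eq_mul] at this
      have hs' := (hNm.1 hs).2
      have ht' := (hPm.1 ht).2
      rw [le_div_iff₀ ht', div_mul_eq_mul_div, div_le_iff_of_neg hs']
      linarith)
    refine ⟨l, fun t ht => ?_⟩
    rcases lt_trichotomy (φ t) 0 with h | h | h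
    · have := hl1 t (hNm.2 ⟨ht, h⟩)
      simp only [div_le_iff_of_neg h] at this
      linarith
    · have := hm t (hmem.2 (Or.inl (hZm.2 ⟨ht, h⟩)))
      simpa [h] using this
    · have := hl2 t (hPm.2 ⟨ht, h⟩)
      simp only [le_div_iff₀ h] at this
      linarith

lemma cone_multi {E ι : Type*} [AddCommGroup E] [Module ℝ E] (L : AddSubgroup E) (T : Finset E)
    (hT : ∀ t ∈ T, t ∈ L) (φ : ι → E →ₗ[ℝ] ℝ) (hφ : ∀ k, ∀ x ∈ L, ∃ n : ℤ, φ k x = n)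
    (s : Finset ι) :
    ∃ T' : Finset E, (∀ t ∈ T', t ∈ L) ∧
      coneHull (T' : Set E) = {x | x ∈ coneHull (T : Set E) ∧ ∀ k ∈ s, φ k x = 0} ∧
      ∀ m : E →ₗ[ℝ] ℝ, (∀ t ∈ T', 0 ≤ m t) →
        ∃ l : ι → ℝ, ∀ t ∈ T, 0 ≤ m t - ∑ k ∈ s, l k * φ k t := by
  classical
  induction s using Finset.induction_on with
  | empty => exact ⟨T, hT, by simp, fun m hm => ⟨0, by simpa using hm⟩⟩
  | insert k s hk ih =>
    obtain ⟨T1, hL1, hC1, hF1⟩ := ih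
    obtain ⟨T2, hL2, hC2, hF2⟩ := cone_step L T1 hL1 (φ k) (hφ k)
    refine ⟨T2, hL2, ?_, ?_⟩
    · rw [hC2, hC1]
      ext x
      simp only [Set.mem_ofPred_eq, Finset.forall_mem_insert]
      tauto
    · intro m hm
      obtain ⟨l0, hl0⟩ := hF2 m hm
      obtain ⟨l, hl⟩ := hF1 (m - l0 • φ k) (by simpa using hl0)
      refine ⟨Function.update l k l0, fun t ht => ?_⟩
      have := hl t ht
      rw [Finset.sum_insert hk, Function.update_self]
      rw [Finset.sum_congr rfl (g := fun j => l j * φ j t) (fun j hj => by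
        rw [Function.update_of_ne (ne_of_mem_of_not_mem hj hk)])]
      simp only [LinearMap.sub_apply, LinearMap.smul_apply, smul_eq_mul] at this
      linarith

lemma realify_toRa {a b : ℕ} (f : (Fin a → ℤ) →ₗ[ℤ] (Fin b → ℤ)) (v : Fin a → ℤ) :
    realify f (toRa v) = toRa (f v) := by
  have h : f v = (LinearMap.toMatrix' f).mulVec v := by
    rw [← Matrix.toLin'_apply, Matrix.toLin'_toMatrix']
  ext k
  rw [h]
  simp [realify, toRa, Matrix.toLin'_apply, Matrix.mulVec, dotProduct]

/-- Dot product with `m` as a linear functional. -/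
noncomputable def dotL {a : ℕ} (m : Fin a → ℝ) : (Fin a → ℝ) →ₗ[ℝ] ℝ where
  toFun v := ∑ i, m i * v i
  map_add' x y := by simp [mul_add, Finset.sum_add_distrib]
  map_smul' r x := by simp [Finset.mul_sum, mul_left_comm]

lemma lin_eq_dot {a : ℕ} (g : (Fin a → ℝ) →ₗ[ℝ] ℝ) (v : Fin a → ℝ) :
    ∑ i, g (Pi.single i 1) * v i = g v := by
  conv_rhs => rw [pi_eq_sum_univ' v]
  rw [map_sum]
  refine Finset.sum_congr rfl fun i _ => ?_
  rw [map_smul, smul_eq_mul, mul_comm]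

/-- Let `N1 = ℤ^a, N2 = ℤ^b, N̄ = ℤ^c` with surjective homomorphisms
`h1 : N1 → N̄`, `h2 : N2 → N̄`, and let `σ1, σ2` be strictly convex rational
polyhedral cones (generated by the finite lattice sets `S1, S2`) with
`σ̄ = h1(σ1) = h2(σ2)` (also strictly convex).  Then:
(1) the fiber product `σ1 ×_{N̄} σ2 = {(v1,v2) | v_i ∈ σ_i, h1 v1 = h2 v2}` is a
rational polyhedral cone on the lattice `N1 ×_{N̄} N2`, i.e. it is generated by
finitely many lattice points of `N1 ×_{N̄} N2`; and
(2) its dual cone is the image of `σ1^∨ × σ2^∨` under the natural surjection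
`M1 ⊕ M2 → (M1 ⊕ M2)/M̄` (with `M̄` embedded antidiagonally by
`m ↦ (h1^* m, -h2^* m)`): concretely, in the full dual space a functional `m` is
nonnegative on `σ1 ×_{N̄} σ2` iff it is a sum `(m1, m2) + w` with `m_i ∈ σ_i^∨` and
`w` in the antidiagonal copy of `M̄ ⊗ ℝ`. -/
theorem stmt_2 (a b c : ℕ)
    (h1 : (Fin a → ℤ) →ₗ[ℤ] (Fin c → ℤ)) (h2 : (Fin b → ℤ) →ₗ[ℤ] (Fin c → ℤ))
    (hs1 : Function.Surjective h1) (hs2 : Function.Surjective h2)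
    (S1 : Finset (Fin a → ℤ)) (S2 : Finset (Fin b → ℤ))
    (hc1 : ∀ x, x ∈ coneHull (toRa '' (S1 : Set (Fin a → ℤ))) → -x ∈ coneHull (toRa '' (S1 : Set (Fin a → ℤ))) → x = 0)
    (hc2 : ∀ x, x ∈ coneHull (toRa '' (S2 : Set (Fin b → ℤ))) → -x ∈ coneHull (toRa '' (S2 : Set (Fin b → ℤ))) → x = 0)
    (hbar : realify h1 '' coneHull (toRa '' (S1 : Set (Fin a → ℤ))) = realify h2 '' coneHull (toRa '' (S2 : Set (Fin b → ℤ))))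
    (hbarconv : ∀ x, x ∈ realify h1 '' coneHull (toRa '' (S1 : Set (Fin a → ℤ))) →
      -x ∈ realify h1 '' coneHull (toRa '' (S1 : Set (Fin a → ℤ))) → x = 0) :
    (∃ T : Finset ((Fin a → ℤ) × (Fin b → ℤ)),
      (∀ t ∈ T, h1 t.1 = h2 t.2) ∧
      {v : (Fin a → ℝ) × (Fin b → ℝ) |
          v.1 ∈ coneHull (toRa '' (S1 : Set (Fin a → ℤ))) ∧ v.2 ∈ coneHull (toRa '' (S2 : Set (Fin b → ℤ))) ∧
          realify h1 v.1 = realify h2 v.2}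
        = coneHull ((fun t : (Fin a → ℤ) × (Fin b → ℤ) => (toRa t.1, toRa t.2)) '' (T : Set ((Fin a → ℤ) × (Fin b → ℤ)))))
    ∧
    ({m : (Fin a → ℝ) × (Fin b → ℝ) |
        ∀ v ∈ {v : (Fin a → ℝ) × (Fin b → ℝ) |
            v.1 ∈ coneHull (toRa '' (S1 : Set (Fin a → ℤ))) ∧ v.2 ∈ coneHull (toRa '' (S2 : Set (Fin b → ℤ))) ∧
            realify h1 v.1 = realify h2 v.2},
          0 ≤ (∑ i, m.1 i * v.1 i) + (∑ i, m.2 i * v.2 i)}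
      = {m : (Fin a → ℝ) × (Fin b → ℝ) |
          ∃ m1 : Fin a → ℝ, (∀ v1 ∈ coneHull (toRa '' (S1 : Set (Fin a → ℤ))), 0 ≤ ∑ i, m1 i * v1 i) ∧
          ∃ m2 : Fin b → ℝ, (∀ v2 ∈ coneHull (toRa '' (S2 : Set (Fin b → ℤ))), 0 ≤ ∑ i, m2 i * v2 i) ∧
          ∃ mb : Fin c → ℝ,
            (∀ v1 : Fin a → ℝ, ∑ i, (m.1 i - m1 i) * v1 i = ∑ k, mb k * realify h1 v1 k) ∧
            (∀ v2 : Fin b → ℝ, ∑ i, (m.2 i - m2 i) * v2 i = -∑ k, mb k * realify h2 v2 k)}) := by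
  classical
  set C1 := coneHull (toRa '' (S1 : Set (Fin a → ℤ))) with hC1
  set C2 := coneHull (toRa '' (S2 : Set (Fin b → ℤ))) with hC2
  set F : (Fin a → ℤ) × (Fin b → ℤ) → (Fin a → ℝ) × (Fin b → ℝ) :=
    fun t => (toRa t.1, toRa t.2) with hF
  let FL : (Fin a → ℤ) × (Fin b → ℤ) →+ (Fin a → ℝ) × (Fin b → ℝ) :=
    { toFun := F
      map_zero' := by ext <;> simp [hF, toRa]
      map_add' := by intro x y; ext <;> simp [hF, toRa] }
  let T0 : Finset ((Fin a → ℝ) × (Fin b → ℝ)) :=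
    S1.image (fun s => F (s, 0)) ∪ S2.image (fun s => F (0, s))
  let φ : Fin c → ((Fin a → ℝ) × (Fin b → ℝ)) →ₗ[ℝ] ℝ := fun k =>
    (LinearMap.proj k).comp ((realify h1).comp (LinearMap.fst ℝ _ _)
      - (realify h2).comp (LinearMap.snd ℝ _ _))
  have hφ : ∀ k v, φ k v = realify h1 v.1 k - realify h2 v.2 k := fun k v => rfl
  have hz : ∀ n, (toRa (0 : Fin n → ℤ)) = 0 := by intro n; ext; simp [toRa]
  have hT0 : coneHull (T0 : Set ((Fin a → ℝ) × (Fin b → ℝ))) = {v | v.1 ∈ C1 ∧ v.2 ∈ C2} := by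
    have e : (T0 : Set ((Fin a → ℝ) × (Fin b → ℝ))) =
        LinearMap.inl NNReal _ _ '' (toRa '' (S1 : Set (Fin a → ℤ))) ∪
        LinearMap.inr NNReal _ _ '' (toRa '' (S2 : Set (Fin b → ℤ))) := by
      simp [T0, hF, hz, Set.image_image]
    rw [e, hC1, hC2]
    simp only [coneHull_eq_span]
    rw [LinearMap.span_inl_union_inr]
    rfl
  obtain ⟨T', hL, hC, hFk⟩ := cone_multi FL.range T0 (by
      intro t ht
      simp only [T0, Finset.mem_union, Finset.mem_image] at ht
      rcases ht with ⟨s, -, rfl⟩ | ⟨s, -, rfl⟩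
      · exact ⟨(s, 0), rfl⟩
      · exact ⟨(0, s), rfl⟩) φ (by
      rintro k x ⟨y, rfl⟩
      refine ⟨h1 y.1 k - h2 y.2 k, ?_⟩
      change realify h1 (toRa y.1) k - realify h2 (toRa y.2) k = _
      rw [realify_toRa, realify_toRa]
      simp [toRa]) Finset.univ
  have hset : {v : (Fin a → ℝ) × (Fin b → ℝ) | v.1 ∈ C1 ∧ v.2 ∈ C2 ∧
      realify h1 v.1 = realify h2 v.2} = coneHull (T' : Set ((Fin a → ℝ) × (Fin b → ℝ))) := by
    rw [hC, hT0]
    ext v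
    simp only [Set.mem_ofPred_eq, Finset.mem_univ, true_imp_iff, hφ, sub_eq_zero, funext_iff,
      and_assoc]
  constructor
  · choose! g hg using hL
    have hg' : ∀ t ∈ T', F (g t) = t := hg
    refine ⟨T'.image g, ?_, ?_⟩
    · intro t ht
      obtain ⟨x, hx, rfl⟩ := Finset.mem_image.1 ht
      have : x ∈ coneHull (T' : Set ((Fin a → ℝ) × (Fin b → ℝ))) := subset_coneHull' _ hx
      rw [← hset] at this
      have h3 := this.2.2
      rw [← hg' x hx] at h3
      simp only [hF, realify_toRa] at h3
      ext k
      have := congrFun h3 k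
      simpa [toRa] using this
    · rw [hset]
      congr 1
      ext x
      simp only [Finset.coe_image, Set.image_image, Set.mem_image, Finset.mem_coe]
      constructor
      · intro hx
        exact ⟨x, hx, hg' x hx⟩
      · rintro ⟨y, hy, rfl⟩
        rw [hg' y hy]; exact hy
  · ext m
    rw [hset]
    simp only [Set.mem_ofPred_eq]
    constructor
    · intro hm
      let Mf : ((Fin a → ℝ) × (Fin b → ℝ)) →ₗ[ℝ] ℝ := (dotL m.1).coprod (dotL m.2)
      obtain ⟨l, hl⟩ := hFk Mf (fun t ht => hm t (subset_coneHull' _ ht))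
      let M' : ((Fin a → ℝ) × (Fin b → ℝ)) →ₗ[ℝ] ℝ := Mf - ∑ k, l k • φ k
      have hM' : ∀ v, M' v = ∑ i, m.1 i * v.1 i + ∑ i, m.2 i * v.2 i
          - ∑ k, l k * (realify h1 v.1 k - realify h2 v.2 k) := by
        intro v
        simp [M', Mf, dotL, hφ]
      have hpos : ∀ v, v.1 ∈ C1 → v.2 ∈ C2 → 0 ≤ M' v := by
        intro v hv1 hv2
        refine coneHull_nonneg (T0 : Set ((Fin a → ℝ) × (Fin b → ℝ))) M' ?_ v ?_
        · intro t ht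
          simpa [M'] using hl t ht
        · rw [hT0]; exact ⟨hv1, hv2⟩
      have z1 : (0 : Fin a → ℝ) ∈ C1 := by
        rw [hC1, coneHull_eq_span]; exact Submodule.zero_mem _
      have z2 : (0 : Fin b → ℝ) ∈ C2 := by
        rw [hC2, coneHull_eq_span]; exact Submodule.zero_mem _
      have d1 : ∀ v, ∑ i, (M'.comp (LinearMap.inl ℝ _ _)) (Pi.single i 1) * v i = M' (v, 0) :=
        fun v => lin_eq_dot (M'.comp (LinearMap.inl ℝ _ _)) v
      have d2 : ∀ v, ∑ i, (M'.comp (LinearMap.inr ℝ _ _)) (Pi.single i 1) * v i = M' (0, v) :=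
        fun v => lin_eq_dot (M'.comp (LinearMap.inr ℝ _ _)) v
      refine ⟨fun i => (M'.comp (LinearMap.inl ℝ _ _)) (Pi.single i 1), ?_,
        fun i => (M'.comp (LinearMap.inr ℝ _ _)) (Pi.single i 1), ?_, l, ?_, ?_⟩
      · intro v hv
        rw [d1]; exact hpos _ hv z2
      · intro v hv
        rw [d2]; exact hpos _ z1 hv
      · intro v
        simp only [sub_mul, Finset.sum_sub_distrib]
        rw [d1, hM']
        simp
      · intro v
        simp only [sub_mul, Finset.sum_sub_distrib]
        rw [d2, hM']
        simp
    · rintro ⟨m1, hm1, m2, hm2, mb, hb1, hb2⟩ v hv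
      rw [← hset] at hv
      obtain ⟨hv1, hv2, hv3⟩ := hv
      have e1 := hb1 v.1
      have e2 := hb2 v.2
      simp only [sub_mul, Finset.sum_sub_distrib] at e1 e2
      rw [hv3] at e1
      have := hm1 _ hv1
      have := hm2 _ hv2
      linarith
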